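/- arXiv:1503.00918 — 2 statements merged into one kernel-verified Lean document; each statement's English description precedes it below -/
import Mathlib

section
/- Let x_{n−1} ≺ … ≺ x_1 ≺ y_{n−1} ≺ … ≺ y_1 ≺ z_{n−1} ≺ … ≺ z_1 ≺ t_{n−1} ≺ … ≺ t_1 be pairwise distinct points of P ordered anticlockwise on the circle. Then for all a, b ∈ {0, 1, …, n−1}, {E(x^a, z^{n−a−1} | y_1, t_1), E(x^b, z^{n−b−1} | y_1, t_1)} = 0 in Q_n(P); in particular, the images A_i = E(x^i, z^{n−i−1} | t_1, y_1) · E(x^{i−1}, z^{n−i} | y_1, t_1) (1 ≤ i ≤ n−1) of the edge functions attached to one fixed edge xz pairwise Poisson-commute. -/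
noncomputable section

open scoped Classical
open MvPolynomial

set_option maxHeartbeats 1000000
set_option synthInstance.maxHeartbeats 400000

instance fact01 : Fact ((0:ℝ) < 1) := ⟨one_pos⟩

/-- The circle, modelled as `ℝ/ℤ`. -/
abbrev Circle1 : Type := AddCircle (1:ℝ)

/-- The coordinate in `[0,1)` of the point `x` of the circle obtained after removing the
point `o` and identifying the complement of `o` with an interval. -/
def coordAt (o x : Circle1) : ℝ := ((AddCircle.equivIco 1 0) (x - o) : ℝ)

/-- The sign `△` of a real number, as a rational number in `{-1, 0, 1}`. -/
def sgnQ (a : ℝ) : ℚ := if a < 0 then -1 else if a = 0 then 0 else 1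

/-- The linking number `J(rx, sy)` of the chords `rx` and `sy`, computed using the
cut point `o`. -/
def linkingAt (o r x s y : Circle1) : ℚ :=
  (1/2) * (sgnQ (coordAt o r - coordAt o x) * sgnQ (coordAt o r - coordAt o y)
        * sgnQ (coordAt o y - coordAt o x)
      - sgnQ (coordAt o r - coordAt o x) * sgnQ (coordAt o r - coordAt o s)
        * sgnQ (coordAt o s - coordAt o x))

lemma circle1_infinite : Infinite Circle1 := by
  have h : (Set.Ico (0:ℝ) (0+1)).Infinite := Set.Ico_infinite (by norm_num)
  haveI := h.to_subtype
  exact Infinite.of_injective (fun q : Set.Ico (0:ℝ) (0+1) => (AddCircle.equivIco 1 0).symm q)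
    ((AddCircle.equivIco 1 0).symm.injective)

lemma exists_cut (r x s y : Circle1) :
    ∃ o : Circle1, o ≠ r ∧ o ≠ x ∧ o ≠ s ∧ o ≠ y := by
  haveI : Infinite Circle1 := circle1_infinite
  have hfin : ({r, x, s, y} : Set Circle1).Finite :=
    (((Set.finite_singleton y).insert s).insert x).insert r
  obtain ⟨o, ho⟩ := hfin.infinite_compl.nonempty
  simp only [Set.mem_compl_iff, Set.mem_insert_iff, Set.mem_singleton_iff, not_or] at ho
  exact ⟨o, ho.1, ho.2.1, ho.2.2.1, ho.2.2.2⟩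

/-- The linking number `J(rx, sy)` of the chords `rx` and `sy` (computed with respect to
some cut point distinct from the four points; by the independence of the choice this is
the linking number). -/
def linkQ (r x s y : Circle1) : ℚ := linkingAt (exists_cut r x s y).choose r x s y

/-- The set of points of the circle `l`, listed in anticlockwise (cyclic) order:
there is a cut point `o` avoiding them such that the induced coordinates are
strictly increasing along the list. -/
def AnticlockwiseList (l : List Circle1) : Prop :=
  ∃ o : Circle1, (∀ p ∈ l, p ≠ o) ∧ (l.map (coordAt o)).Chain' (· < ·)

/-- Index type for the generators `xy` of the swapping ring of `P`
(one generator for each ordered pair of distinct points; the generators `xx`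
are identified with `0`). -/
abbrev SwapIdx (P : Set Circle1) : Type := {q : (↥P) × (↥P) // q.1 ≠ q.2}

/-- The swapping ring `Z(P)`: the polynomial ring over `K` on the generators `xy`,
`x ≠ y ∈ P` (this realizes the commutative ring generated by all ordered pairs `xy`
subject to the relations `xx = 0`). -/
abbrev SwapRing (K : Type) [Field K] (P : Set Circle1) : Type := MvPolynomial (SwapIdx P) K

/-- The generator `xy` of the swapping ring (equal to `0` when `x = y`). -/
def gen (K : Type) [Field K] (P : Set Circle1) (x y : ↥P) : SwapRing K P :=
  if h : x ≠ y then MvPolynomial.X (⟨(x, y), h⟩ : SwapIdx P) else 0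

/-- The value of the `(c1,c2)`-swapping bracket on two generators `rx` and `sy`:
`J(rx,sy) • (c1 • ry·sx + c2 • rx·sy)`. -/
def genBr (K : Type) [Field K] (P : Set Circle1) (c1 c2 : K) (g g' : SwapIdx P) :
    SwapRing K P :=
  ((linkQ g.1.1.1 g.1.2.1 g'.1.1.1 g'.1.2.1 : ℚ) : K) •
    (c1 • (gen K P g.1.1 g'.1.2 * gen K P g'.1.1 g.1.2)
      + c2 • (gen K P g.1.1 g.1.2 * gen K P g'.1.1 g'.1.2))

/-- The `(c1,c2)`-swapping bracket on `Z(P)`: the biderivation extending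
`{rx, sy} = J(rx,sy)·(c1·ry·sx + c2·rx·sy)` by the Leibniz rule in each argument.
The swapping bracket is the case `c1 = 1, c2 = 0`. -/
def swapBr (K : Type) [Field K] (P : Set Circle1) (c1 c2 : K) (a b : SwapRing K P) :
    SwapRing K P :=
  (MvPolynomial.mkDerivation K
    (fun g : SwapIdx P => (MvPolynomial.mkDerivation K (genBr K P c1 c2 g)) b)) a

/-- `Δ((x_1,…,x_m),(y_1,…,y_m)) = det (x_i y_j)` in the swapping ring. -/
def Dmat (K : Type) [Field K] (P : Set Circle1) (m : ℕ) (xs ys : Fin m → ↥P) :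
    SwapRing K P :=
  Matrix.det (Matrix.of fun i j => gen K P (xs i) (ys j))

/-- The ideal `R_n(P)` of `Z(P)` generated by all `(n+1)×(n+1)` determinants
`Δ((x_1,…,x_{n+1}),(y_1,…,y_{n+1}))`. -/
def Rideal (K : Type) [Field K] (P : Set Circle1) (n : ℕ) : Ideal (SwapRing K P) :=
  Ideal.span {D : SwapRing K P | ∃ xs ys : Fin (n+1) → ↥P, D = Dmat K P (n+1) xs ys}

/-- The rank `n` swapping ring `Z_n(P) = Z(P)/R_n(P)`. -/
abbrev ZnRing (K : Type) [Field K] (P : Set Circle1) (n : ℕ) : Type :=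
  SwapRing K P ⧸ Rideal K P n

/-- The quotient map `Z(P) → Z_n(P)`. -/
def toZn (K : Type) [Field K] (P : Set Circle1) (n : ℕ) :
    SwapRing K P →+* ZnRing K P n := Ideal.Quotient.mk (Rideal K P n)

/-- The total fraction ring `Q_n(P)` of the rank `n` swapping ring. -/
abbrev QnRing (K : Type) [Field K] (P : Set Circle1) (n : ℕ) : Type :=
  Localization (nonZeroDivisors (ZnRing K P n))

/-- The canonical map `Z(P) → Q_n(P)`. -/
def toQn (K : Type) [Field K] (P : Set Circle1) (n : ℕ) :
    SwapRing K P →+* QnRing K P n :=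
  (algebraMap (ZnRing K P n) (QnRing K P n)).comp (toZn K P n)

/-- `Bq` is the extension to the total fraction ring `Q_n(P)` of the `(c1,c2)`-swapping
bracket of the rank `n` swapping algebra: it agrees with the swapping bracket on the image
of `Z(P)` and satisfies the Leibniz rule in both arguments (these properties determine it
uniquely). -/
def IsQnBracket (K : Type) [Field K] (P : Set Circle1) (n : ℕ) (c1 c2 : K)
    (Bq : QnRing K P n → QnRing K P n → QnRing K P n) : Prop :=
  (∀ a b : SwapRing K P,
      Bq (toQn K P n a) (toQn K P n b) = toQn K P n (swapBr K P c1 c2 a b)) ∧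
  (∀ a b c : QnRing K P n, Bq (a * b) c = a * Bq b c + b * Bq a c) ∧
  (∀ a b c : QnRing K P n, Bq a (b * c) = b * Bq a c + c * Bq a b)

/-- The `n`-tuple `(x_1, …, x_a, y_1, …, y_b, z_1, …, z_{n-a-b})` built from three
families of points (families are indexed from `0`, i.e. `x 0 = x_1`). -/
def rows3 {α : Type*} {n : ℕ} (x y z : ℕ → α) (a b : ℕ) : Fin n → α :=
  fun i => if (i : ℕ) < a then x (i : ℕ)
    else if (i : ℕ) < a + b then y ((i : ℕ) - a)
    else z ((i : ℕ) - (a + b))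

/-- The `n`-tuple `(x_1, …, x_a, y_1, …, y_b, z_1, …, z_{n-1-a-b}, w)` built from three
families of points and a final point `w`. -/
def rows3s {α : Type*} {n : ℕ} (x y z : ℕ → α) (a b : ℕ) (w : α) : Fin n → α :=
  fun i => if (i : ℕ) < a then x (i : ℕ)
    else if (i : ℕ) < a + b then y ((i : ℕ) - a)
    else if (i : ℕ) < n - 1 then z ((i : ℕ) - (a + b))
    else w

/-- The `n`-tuple `(x_1, …, x_{n-1}, t)`. -/
def snocTup {α : Type*} {n : ℕ} (x : ℕ → α) (t : α) : Fin n → α :=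
  fun i => if (i : ℕ) < n - 1 then x (i : ℕ) else t

/-- The list `f_a, f_{a-1}, …, f_1` (descending enumeration). -/
def descPts (f : ℕ → Circle1) (a : ℕ) : List Circle1 := ((List.range a).map f).reverse

/-- The list `f_1, f_2, …, f_a` (ascending enumeration). -/
def ascPts (f : ℕ → Circle1) (a : ℕ) : List Circle1 := (List.range a).map f

/-- The `(n×n)`-determinant quotient `Δ(numR, v)/Δ(denR, v)` as an element of the total
fraction ring `Q_n(P)`. -/
def EQuot (K : Type) [Field K] (P : Set Circle1) (n : ℕ)
    (numR denR v : Fin n → ↥P)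
    (h : toZn K P n (Dmat K P n denR v) ∈ nonZeroDivisors (ZnRing K P n)) :
    QnRing K P n :=
  Localization.mk (toZn K P n (Dmat K P n numR v)) ⟨toZn K P n (Dmat K P n denR v), h⟩


/-- The image under the homomorphism `θ` of the `(i, n-i)`-edge function of the edge `xz`
of the quadrilateral `x y z t` (with `t1 = t_1` and `y1 = y_1`):
`E(x^i, z^{n-i-1} | t_1, y_1) · E(x^{i-1}, z^{n-i} | y_1, t_1)`,
computed with the right-side `n`-tuple `v`. -/
def edgeQuot (K : Type) [Field K] (P : Set Circle1) (n : ℕ) (x z : ℕ → ↥P)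
    (t1 y1 : ↥P) (i : ℕ) (v : Fin n → ↥P)
    (h1 : toZn K P n (Dmat K P n (rows3s x z x i (n-i-1) y1) v)
          ∈ nonZeroDivisors (ZnRing K P n))
    (h2 : toZn K P n (Dmat K P n (rows3s x z x (i-1) (n-i) t1) v)
          ∈ nonZeroDivisors (ZnRing K P n)) : QnRing K P n :=
  EQuot K P n (rows3s x z x i (n-i-1) t1) (rows3s x z x i (n-i-1) y1) v h1
    * EQuot K P n (rows3s x z x (i-1) (n-i) y1) (rows3s x z x (i-1) (n-i) t1) v h2

section MatLemmas

variable {A : Type*} [CommRing A] {n : ℕ}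

lemma hlp_det_updateRow (M : Matrix (Fin n) (Fin n) A) (i : Fin n) (w : Fin n → A) :
    (M.updateRow i w).det = ∑ j, M.adjugate j i * w j := by
  rw [← Matrix.cramer_transpose_apply, Matrix.cramer_eq_adjugate_mulVec,
    ← Matrix.adjugate_transpose]
  rfl

lemma hlp_adj_mul (M : Matrix (Fin n) (Fin n) A) (j l : Fin n) :
    ∑ i, M.adjugate j i * M i l = if j = l then M.det else 0 := by
  have := congrFun (congrFun (Matrix.adjugate_mul M) j) l
  rw [Matrix.mul_apply] at this
  rw [this]
  simp [Matrix.one_apply]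

lemma hlp_cramer (M N : Matrix (Fin n) (Fin n) A) (k : Fin n) :
    ∑ i, (M.updateRow i (N k)).det * (N.updateRow k (M i)).det = M.det * N.det := by
  simp_rw [hlp_det_updateRow, Finset.sum_mul_sum]
  have : ∀ i j l : Fin n, M.adjugate j i * N k j * (N.adjugate l k * M i l)
      = (N k j * N.adjugate l k) * (M.adjugate j i * M i l) := by intros; ring
  simp_rw [this]
  rw [Finset.sum_comm]
  have h2 : ∀ j : Fin n, ∑ i, ∑ l, (N k j * N.adjugate l k) * (M.adjugate j i * M i l)
      = N k j * N.adjugate j k * M.det := by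
    intro j
    rw [Finset.sum_comm]
    simp_rw [← Finset.mul_sum, hlp_adj_mul]
    simp
  simp_rw [h2]
  rw [← Finset.sum_mul, ← Matrix.det_eq_sum_mul_adjugate_row N k, mul_comm]

lemma hlp_key (M N : Matrix (Fin n) (Fin n) A) (α β γ δ : Fin n → Fin n → A)
    (hβ : ∀ j, β j j = 0) :
    ∑ i, ∑ j, M.adjugate j i * ∑ k, ∑ l, N.adjugate l k *
      ((α i k + β j l + γ i l + δ k j) * (M i l * N k j))
    = (∑ i, ∑ k, α i k * ((M.updateRow i (N k)).det * (N.updateRow k (M i)).det))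
      + N.det * (∑ i, ∑ l, γ i l * (M.adjugate l i * M i l))
      + M.det * (∑ k, ∑ l, δ k l * (N.adjugate l k * N k l)) := by
  have e1 : ∑ i, ∑ j, M.adjugate j i * ∑ k, ∑ l, N.adjugate l k *
      ((α i k + β j l + γ i l + δ k j) * (M i l * N k j))
    = (∑ i, ∑ j, ∑ k, ∑ l, α i k * ((M.adjugate j i * N k j) * (N.adjugate l k * M i l)))
    + (∑ i, ∑ j, ∑ k, ∑ l, β j l * ((M.adjugate j i * M i l) * (N.adjugate l k * N k j)))
    + (∑ i, ∑ j, ∑ k, ∑ l, γ i l * ((M.adjugate j i * M i l) * (N.adjugate l k * N k j)))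
    + (∑ i, ∑ j, ∑ k, ∑ l, δ k j * ((M.adjugate j i * M i l) * (N.adjugate l k * N k j))) := by
    simp_rw [← Finset.sum_add_distrib, Finset.mul_sum]
    refine Finset.sum_congr rfl fun i _ => Finset.sum_congr rfl fun j _ =>
      Finset.sum_congr rfl fun k _ => Finset.sum_congr rfl fun l _ => ?_
    ring
  rw [e1]
  have t1 : (∑ i, ∑ j, ∑ k, ∑ l, α i k * ((M.adjugate j i * N k j) * (N.adjugate l k * M i l)))
      = ∑ i, ∑ k, α i k * ((M.updateRow i (N k)).det * (N.updateRow k (M i)).det) := by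
    refine Finset.sum_congr rfl fun i _ => ?_
    rw [Finset.sum_comm]
    refine Finset.sum_congr rfl fun k _ => ?_
    rw [hlp_det_updateRow, hlp_det_updateRow, Finset.sum_mul_sum]
    simp_rw [Finset.mul_sum]
  have t2 : (∑ i, ∑ j, ∑ k, ∑ l, β j l * ((M.adjugate j i * M i l) * (N.adjugate l k * N k j)))
      = 0 := by
    have : ∀ j l, ∑ i, ∑ k, β j l * ((M.adjugate j i * M i l) * (N.adjugate l k * N k j)) = 0 := by
      intro j l
      simp_rw [← Finset.mul_sum]
      rw [← Finset.sum_mul, hlp_adj_mul]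
      split_ifs with h
      · subst h; simp [hβ]
      · simp
    rw [Finset.sum_comm]
    refine Finset.sum_eq_zero fun j _ => ?_
    simp_rw [Finset.sum_comm (s := Finset.univ) (t := Finset.univ) (f := fun k l =>
      β j l * ((M.adjugate j _ * M _ l) * (N.adjugate l k * N k j)))]
    rw [Finset.sum_comm]
    exact Finset.sum_eq_zero fun l _ => this j l
  have t3 : (∑ i, ∑ j, ∑ k, ∑ l, γ i l * ((M.adjugate j i * M i l) * (N.adjugate l k * N k j)))
      = N.det * (∑ i, ∑ l, γ i l * (M.adjugate l i * M i l)) := by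
    rw [Finset.mul_sum]
    refine Finset.sum_congr rfl fun i _ => ?_
    rw [Finset.mul_sum]
    have : ∀ j, ∑ k, ∑ l, γ i l * ((M.adjugate j i * M i l) * (N.adjugate l k * N k j))
        = N.det * (γ i j * (M.adjugate j i * M i j)) := by
      intro j
      rw [Finset.sum_comm]
      simp_rw [← Finset.mul_sum, hlp_adj_mul]
      simp
      ring
    simp_rw [this]
  have t4 : (∑ i, ∑ j, ∑ k, ∑ l, δ k j * ((M.adjugate j i * M i l) * (N.adjugate l k * N k j)))
      = M.det * (∑ k, ∑ l, δ k l * (N.adjugate l k * N k l)) := by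
    rw [Finset.sum_comm]
    have : ∀ j, ∑ i, ∑ k, ∑ l, δ k j * ((M.adjugate j i * M i l) * (N.adjugate l k * N k j))
        = ∑ k, M.det * (δ k j * (N.adjugate j k * N k j)) := by
      intro j
      rw [Finset.sum_comm]
      refine Finset.sum_congr rfl fun k _ => ?_
      rw [Finset.sum_comm]
      have h3 : ∀ l, ∑ i, δ k j * ((M.adjugate j i * M i l) * (N.adjugate l k * N k j))
          = (∑ i, M.adjugate j i * M i l) * (δ k j * (N.adjugate l k * N k j)) := by
        intro l
        rw [Finset.sum_mul]
        exact Finset.sum_congr rfl fun i _ => by ring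
      simp_rw [h3, hlp_adj_mul]
      simp
    simp_rw [this]
    rw [Finset.sum_comm]
    simp_rw [Finset.mul_sum]
  rw [t1, t2, t3, t4, add_zero]

lemma hlp_der_prod {K : Type*} [CommRing K] [Algebra K A] (D : Derivation K A A)
    {ι : Type*} [DecidableEq ι] (s : Finset ι) (f : ι → A) :
    D (∏ i ∈ s, f i) = ∑ i ∈ s, (∏ j ∈ s.erase i, f j) * D (f i) := by
  induction s using Finset.induction_on with
  | empty => simp
  | insert a s ha ih =>
    rw [Finset.prod_insert ha, D.leibniz, ih, Finset.sum_insert ha, Finset.erase_insert ha,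
      smul_eq_mul, smul_eq_mul, add_comm, Finset.mul_sum]
    congr 1
    refine Finset.sum_congr rfl fun i hi => ?_
    have hne : a ≠ i := fun h => ha (h ▸ hi)
    rw [Finset.erase_insert_of_ne hne, Finset.prod_insert, mul_assoc]
    simp [ha]

lemma hlp_der_det {K : Type*} [CommRing K] [Algebra K A] (D : Derivation K A A)
    (M : Matrix (Fin n) (Fin n) A) :
    D M.det = ∑ i, ∑ j, M.adjugate j i * D (M i j) := by
  have h1 : ∀ j, ∑ i, M.adjugate j i * D (M i j) = (M.updateCol j (fun i => D (M i j))).det := by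
    intro j
    rw [← Matrix.cramer_apply, Matrix.cramer_eq_adjugate_mulVec]
    rfl
  rw [Finset.sum_comm]
  simp_rw [h1, Matrix.det_apply]
  rw [map_sum, Finset.sum_comm]
  refine Finset.sum_congr rfl fun σ _ => ?_
  rw [← Finset.smul_sum]
  have : D (Equiv.Perm.sign σ • ∏ i, M (σ i) i) = Equiv.Perm.sign σ • D (∏ i, M (σ i) i) := by
    rcases Int.units_eq_one_or (Equiv.Perm.sign σ) with h | h <;> simp [h]
  rw [this, hlp_der_prod]
  congr 1
  refine Finset.sum_congr rfl fun j _ => ?_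
  rw [← Finset.mul_prod_erase Finset.univ _ (Finset.mem_univ j), mul_comm]
  congr 1
  · simp
  · refine Finset.prod_congr rfl fun i hi => ?_
    rw [Matrix.updateCol_ne (Finset.ne_of_mem_erase hi)]

end MatLemmas
lemma hlp_sgn_neg (a : ℝ) : sgnQ (-a) = - sgnQ a := by
  unfold sgnQ
  rcases lt_trichotomy a 0 with h | h | h
  · simp [h, not_lt.mpr h.le, h.ne]
  · simp [h]
  · simp [h, not_lt.mpr h.le, h.ne']

lemma hlp_sgn_pos {a : ℝ} (h : 0 < a) : sgnQ a = 1 := by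
  simp [sgnQ, not_lt.mpr h.le, h.ne']

lemma hlp_sgn_of_neg {a : ℝ} (h : a < 0) : sgnQ a = -1 := by
  simp [sgnQ, h]

lemma hlp_sgn_zero : sgnQ 0 = 0 := by simp [sgnQ]

lemma hlp_triple (r x y : ℝ) :
    sgnQ (r - x) * sgnQ (r - y) * sgnQ (y - x)
      = -(sgnQ (r - x) + sgnQ (x - y) + sgnQ (y - r)) := by
  have h1 : sgnQ (x - y) = - sgnQ (y - x) := by rw [← hlp_sgn_neg]; congr 1; ring
  have h2 : sgnQ (y - r) = - sgnQ (r - y) := by rw [← hlp_sgn_neg]; congr 1; ring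
  rw [h1, h2]
  unfold sgnQ
  split_ifs <;> grind

lemma hlp_linkingAt (o r x s y : Circle1) :
    linkingAt o r x s y = (1/2) *
      (sgnQ (coordAt o s - coordAt o r) + sgnQ (coordAt o y - coordAt o x)
        + sgnQ (coordAt o r - coordAt o y) + sgnQ (coordAt o x - coordAt o s)) := by
  unfold linkingAt
  rw [hlp_triple, hlp_triple]
  have h1 : ∀ a b : ℝ, sgnQ (a - b) = - sgnQ (b - a) := by
    intro a b; rw [← hlp_sgn_neg]; congr 1; ring
  rw [h1 (coordAt o x) (coordAt o y), h1 (coordAt o y) (coordAt o r)]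
  ring

lemma hlp_coord_shift (o o' x : Circle1) :
    ∃ k : ℤ, coordAt o' x = coordAt o x + coordAt o' o - k := by
  have hc : ∀ a b : Circle1, ((coordAt a b : ℝ) : Circle1) = b - a := by
    intro a b
    exact AddCircle.coe_equivIco
  have : ((coordAt o x + coordAt o' o - coordAt o' x : ℝ) : Circle1) = 0 := by
    rw [AddCircle.coe_sub, AddCircle.coe_add, hc, hc, hc]; abel
  rw [AddCircle.coe_eq_zero_iff] at this
  obtain ⟨k, hk⟩ := this
  refine ⟨k, ?_⟩
  simp at hk
  linarith

lemma hlp_coord_mem (o x : Circle1) : 0 ≤ coordAt o x ∧ coordAt o x < 1 := by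
  have := ((AddCircle.equivIco 1 0) (x - o)).2
  simpa [coordAt] using this

lemma hlp_sgn_shift (o o' : Circle1) : ∃ ε : Circle1 → ℚ, ∀ p q,
    sgnQ (coordAt o' p - coordAt o' q)
      = sgnQ (coordAt o p - coordAt o q) - 2 * (ε p - ε q) := by
  choose k hk using hlp_coord_shift o o'
  have hk01 : ∀ p, k p = 0 ∨ k p = 1 := by
    intro p
    have h1 := hlp_coord_mem o p
    have h2 := hlp_coord_mem o' p
    have h3 := hlp_coord_mem o' o
    have h4 := hk p
    have h5 : ((-1 : ℤ) : ℝ) < (k p : ℝ) := by push_cast; linarith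
    have h6 : (k p : ℝ) < ((2 : ℤ) : ℝ) := by push_cast; linarith
    have h5' := Int.cast_lt.mp h5
    have h6' := Int.cast_lt.mp h6
    omega
  refine ⟨fun p => k p, fun p q => ?_⟩
  have hp1 := hlp_coord_mem o' p
  have hq1 := hlp_coord_mem o' q
  have hp := hk p
  have hq := hk q
  show _ = _ - 2 * ((k p : ℚ) - (k q : ℚ))
  rcases hk01 p with h | h <;> rcases hk01 q with h' | h' <;> rw [h] at hp ⊢ <;> rw [h'] at hq ⊢ <;>
    push_cast at hp hq ⊢
  · rw [hp, hq]; simp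
  · rw [hlp_sgn_pos (a := coordAt o' p - coordAt o' q)
        (by linarith [(hlp_coord_mem o p).1, (hlp_coord_mem o q).2]),
      hlp_sgn_of_neg (a := coordAt o p - coordAt o q) (by linarith)]; norm_num
  · rw [hlp_sgn_of_neg (a := coordAt o' p - coordAt o' q)
        (by linarith [(hlp_coord_mem o q).1, (hlp_coord_mem o p).2]),
      hlp_sgn_pos (a := coordAt o p - coordAt o q) (by linarith)]; norm_num
  · rw [hp, hq]; simp

lemma hlp_linkQ (o r x s y : Circle1) :
    linkQ r x s y = (1/2) *
      (sgnQ (coordAt o s - coordAt o r) + sgnQ (coordAt o y - coordAt o x)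
        + sgnQ (coordAt o r - coordAt o y) + sgnQ (coordAt o x - coordAt o s)) := by
  unfold linkQ
  rw [hlp_linkingAt]
  obtain ⟨ε, hε⟩ := hlp_sgn_shift o (exists_cut r x s y).choose
  rw [hε, hε, hε, hε]
  ring

/-- The matrix of generators. -/
def hlpM (K : Type) [Field K] (P : Set Circle1) {n : ℕ} (R v : Fin n → ↥P) :
    Matrix (Fin n) (Fin n) (SwapRing K P) := Matrix.of fun i j => gen K P (R i) (v j)

/-- The sign as a constant. -/
def hlpS (K : Type) [Field K] (P : Set Circle1) (o : Circle1) (p q : ↥P) : K :=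
  ((sgnQ (coordAt o p - coordAt o q) : ℚ) : K)

lemma hlp_swap_gen_gen (K : Type) [Field K] (P : Set Circle1) (r x s y : ↥P) :
    swapBr K P 1 0 (gen K P r x) (gen K P s y)
      = C ((linkQ r x s y : ℚ) : K) * (gen K P r y * gen K P s x) := by
  by_cases h : r = x
  · subst h
    have h0 : linkQ (r : Circle1) r s y = 0 := by
      rw [hlp_linkQ 0]
      have h1 : ∀ a b : ℝ, sgnQ (a - b) = - sgnQ (b - a) := by
        intro a b; rw [← hlp_sgn_neg]; congr 1; ring
      rw [h1 (coordAt 0 (s : Circle1)), h1 (coordAt 0 (y : Circle1))]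
      ring
    simp [h0, gen, swapBr]
  · by_cases h' : s = y
    · subst h'
      have h0 : linkQ (r : Circle1) x s s = 0 := by
        rw [hlp_linkQ 0]
        have h1 : ∀ a b : ℝ, sgnQ (a - b) = - sgnQ (b - a) := by
          intro a b; rw [← hlp_sgn_neg]; congr 1; ring
        rw [h1 (coordAt 0 (s : Circle1)) (coordAt 0 (r : Circle1)),
          h1 (coordAt 0 (s : Circle1)) (coordAt 0 (x : Circle1))]
        ring
      rw [h0]
      have hg : gen K P s s = 0 := by simp [gen]
      rw [hg]
      unfold swapBr
      simp only [gen, h, ne_eq, not_false_eq_true, dif_pos, mkDerivation_X]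
      simp
    · have hr : gen K P r x = X ⟨(r, x), h⟩ := by simp [gen, h]
      have hs : gen K P s y = X ⟨(s, y), h'⟩ := by simp [gen, h']
      rw [hr, hs]
      unfold swapBr
      rw [mkDerivation_X, mkDerivation_X]
      unfold genBr
      simp [MvPolynomial.smul_eq_C_mul]

lemma hlp_swap_gen_det (K : Type) [Field K] (P : Set Circle1) {n : ℕ} (r x : ↥P)
    (N : Matrix (Fin n) (Fin n) (SwapRing K P)) :
    swapBr K P 1 0 (gen K P r x) N.det
      = ∑ k, ∑ l, N.adjugate l k * swapBr K P 1 0 (gen K P r x) (N k l) := by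
  by_cases h : r = x
  · subst h
    have hg : gen K P r r = 0 := by simp [gen]
    rw [hg]
    simp [swapBr]
  · have hr : gen K P r x = X ⟨(r, x), h⟩ := by simp [gen, h]
    rw [hr]
    unfold swapBr
    simp_rw [mkDerivation_X]
    exact hlp_der_det _ N

lemma hlp_swap_det_left (K : Type) [Field K] (P : Set Circle1) {n : ℕ}
    (M : Matrix (Fin n) (Fin n) (SwapRing K P)) (b : SwapRing K P) :
    swapBr K P 1 0 M.det b = ∑ i, ∑ j, M.adjugate j i * swapBr K P 1 0 (M i j) b := by
  unfold swapBr
  exact hlp_der_det _ M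

lemma hlp_swap_det (K : Type) [Field K] (P : Set Circle1) {n : ℕ} (R S v : Fin n → ↥P) :
    swapBr K P 1 0 (hlpM K P R v).det (hlpM K P S v).det
      = ∑ i, ∑ j, (hlpM K P R v).adjugate j i * ∑ k, ∑ l, (hlpM K P S v).adjugate l k *
        (C ((linkQ (R i) (v j) (S k) (v l) : ℚ) : K) *
          (hlpM K P R v i l * hlpM K P S v k j)) := by
  rw [hlp_swap_det_left]
  refine Finset.sum_congr rfl fun i _ => Finset.sum_congr rfl fun j _ => ?_
  have e : ∀ (Q : Fin n → ↥P) (i j : Fin n), hlpM K P Q v i j = gen K P (Q i) (v j) :=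
    fun _ _ _ => rfl
  rw [e R i j, hlp_swap_gen_det]
  refine congrArg (fun u => _ * u) ?_
  refine Finset.sum_congr rfl fun k _ => Finset.sum_congr rfl fun l _ => ?_
  rw [e S k l, hlp_swap_gen_gen, e, e]

/-- The main part of the bracket. -/
def hlpT (K : Type) [Field K] (P : Set Circle1) (o : Circle1) {n : ℕ} (R S v : Fin n → ↥P) :
    SwapRing K P :=
  ∑ i, ∑ k, C (hlpS K P o (S k) (R i)) *
    (((hlpM K P R v).updateRow i (hlpM K P S v k)).det *
      ((hlpM K P S v).updateRow k (hlpM K P R v i)).det)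

/-- The auxiliary part of the bracket. -/
def hlpA (K : Type) [Field K] (P : Set Circle1) (o : Circle1) {n : ℕ} (R v : Fin n → ↥P) :
    SwapRing K P :=
  ∑ i, ∑ l, C (hlpS K P o (R i) (v l)) * ((hlpM K P R v).adjugate l i * hlpM K P R v i l)

lemma hlpS_antisymm (K : Type) [Field K] (P : Set Circle1) (o : Circle1) (p q : ↥P) :
    hlpS K P o p q = - hlpS K P o q p := by
  unfold hlpS
  rw [← Rat.cast_neg, ← hlp_sgn_neg]
  congr 3; ring

lemma hlpS_self (K : Type) [Field K] (P : Set Circle1) (o : Circle1) (p : ↥P) :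
    hlpS K P o p p = 0 := by
  unfold hlpS
  rw [sub_self, hlp_sgn_zero, Rat.cast_zero]

lemma hlp_bracket (K : Type) [Field K] [CharZero K] (P : Set Circle1) (o : Circle1) {n : ℕ}
    (R S v : Fin n → ↥P) :
    2 * swapBr K P 1 0 (hlpM K P R v).det (hlpM K P S v).det
      = hlpT K P o R S v + (hlpM K P S v).det * hlpA K P o R v
        - (hlpM K P R v).det * hlpA K P o S v := by
  have key := hlp_key (hlpM K P R v) (hlpM K P S v)
    (fun i k => C (hlpS K P o (S k) (R i))) (fun j l => C (hlpS K P o (v l) (v j)))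
    (fun i l => C (hlpS K P o (R i) (v l))) (fun k j => C (hlpS K P o (v j) (S k)))
    (fun j => by rw [hlpS_self, C_0])
  have hneg : ∑ k, ∑ l, C (hlpS K P o (v l) (S k)) *
      ((hlpM K P S v).adjugate l k * hlpM K P S v k l) = - hlpA K P o S v := by
    unfold hlpA
    rw [← Finset.sum_neg_distrib]
    refine Finset.sum_congr rfl fun k _ => ?_
    rw [← Finset.sum_neg_distrib]
    refine Finset.sum_congr rfl fun l _ => ?_
    rw [hlpS_antisymm, C_neg, neg_mul]
  rw [hneg] at key
  rw [hlp_swap_det, Finset.mul_sum]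
  trans (hlpT K P o R S v + (hlpM K P S v).det * hlpA K P o R v
        + (hlpM K P R v).det * (-hlpA K P o S v))
  · refine Eq.trans ?_ key
    refine Finset.sum_congr rfl fun i _ => ?_
    rw [Finset.mul_sum]
    refine Finset.sum_congr rfl fun j _ => ?_
    rw [mul_left_comm]
    congr 1
    rw [Finset.mul_sum]
    refine Finset.sum_congr rfl fun k _ => ?_
    rw [Finset.mul_sum]
    refine Finset.sum_congr rfl fun l _ => ?_
    rw [mul_left_comm, ← mul_assoc (2 : SwapRing K P)]
    congr 2
    rw [← C_add, ← C_add, ← C_add, hlp_linkQ o]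
    have : (2 : SwapRing K P) = C 2 := (map_ofNat C 2).symm
    rw [this, ← C_mul]
    congr 1
    unfold hlpS
    push_cast
    ring
  · ring

lemma hlpT_antisymm (K : Type) [Field K] (P : Set Circle1) (o : Circle1) {n : ℕ}
    (R S v : Fin n → ↥P) : hlpT K P o R S v = - hlpT K P o S R v := by
  unfold hlpT
  rw [Finset.sum_comm, ← Finset.sum_neg_distrib]
  refine Finset.sum_congr rfl fun k _ => ?_
  rw [← Finset.sum_neg_distrib]
  refine Finset.sum_congr rfl fun i _ => ?_
  rw [hlpS_antisymm, C_neg]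
  ring

lemma hlp_kill (K : Type) [Field K] (P : Set Circle1) {n : ℕ} (R S v : Fin n → ↥P)
    {i i' k : Fin n} (h : i' ≠ i) (he : R i' = S k) :
    ((hlpM K P R v).updateRow i (hlpM K P S v k)).det = 0 := by
  refine Matrix.det_zero_of_row_eq h ?_
  rw [Matrix.updateRow_ne h, Matrix.updateRow_self]
  ext j
  simp [hlpM, he]

lemma hlpT_eval (K : Type) [Field K] (P : Set Circle1) (o : Circle1) {n : ℕ}
    (R S v : Fin n → ↥P) (f : Fin n → K)
    (hf : ∀ i k, (hlpS K P o (S k) (R i) = f k) ∨ (∃ i', i' ≠ i ∧ R i' = S k) ∨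
      (∃ k', k' ≠ k ∧ S k' = R i)) :
    hlpT K P o R S v = C (∑ k, f k) * ((hlpM K P R v).det * (hlpM K P S v).det) := by
  have h1 : hlpT K P o R S v = ∑ i, ∑ k, C (f k) *
    (((hlpM K P R v).updateRow i (hlpM K P S v k)).det *
      ((hlpM K P S v).updateRow k (hlpM K P R v i)).det) := by
    unfold hlpT
    refine Finset.sum_congr rfl fun i _ => Finset.sum_congr rfl fun k _ => ?_
    rcases hf i k with h | ⟨i', h, he⟩ | ⟨k', h, he⟩
    · rw [h]
    · rw [hlp_kill K P R S v h he]; ring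
    · rw [hlp_kill K P S R v h he]; ring
  rw [h1, Finset.sum_comm, map_sum, Finset.sum_mul]
  refine Finset.sum_congr rfl fun k _ => ?_
  rw [← Finset.mul_sum, hlp_cramer]

/-- Indicator of the point `t`. -/
def hlpH (K : Type) [Field K] (w : Bool) : K := if w then 1 else 0

lemma hlpT_config_le (K : Type) [Field K] [CharZero K] (P : Set Circle1) (o : Circle1) (n : ℕ)
    (hn : 2 ≤ n) (x z : ℕ → ↥P) (y0 t0 : ↥P)
    (hxy : ∀ i < n - 1, coordAt o (x i) < coordAt o y0)
    (hyz : ∀ i < n - 1, coordAt o y0 < coordAt o (z i))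
    (hzt : ∀ i < n - 1, coordAt o (z i) < coordAt o t0)
    (a b : ℕ) (hab : a ≤ b) (hb : b ≤ n - 1) :
    ∃ c : K, ∀ (w w' : Bool) (v : Fin n → ↥P),
      hlpT K P o (rows3s x z x a (n-a-1) (bif w then t0 else y0))
        (rows3s x z x b (n-b-1) (bif w' then t0 else y0)) v
      = C (c + hlpH K w' - hlpH K w) *
        ((hlpM K P (rows3s x z x a (n-a-1) (bif w then t0 else y0)) v).det *
         (hlpM K P (rows3s x z x b (n-b-1) (bif w' then t0 else y0)) v).det) := by
  have hyt : coordAt o y0 < coordAt o t0 := (hyz 0 (by omega)).trans (hzt 0 (by omega))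
  refine ⟨∑ k : Fin n, (if (k : ℕ) < a then 0 else if (k : ℕ) < b then (-1 : K) else 0),
    fun w w' v => ?_⟩
  rw [hlpT_eval K P o _ _ v (fun k => (if (k : ℕ) < a then 0 else if (k : ℕ) < b then (-1 : K) else 0)
    + if k = ⟨n - 1, by omega⟩ then hlpH K w' - hlpH K w else 0)]
  · congr 2
    rw [Finset.sum_add_distrib, Finset.sum_ite_eq' Finset.univ]
    simp
    ring
  have hR : ∀ (e : ℕ) (u : ↥P) (i : Fin n), e ≤ n - 1 →
      ((i : ℕ) < e ∧ rows3s x z x e (n-e-1) u i = x i) ∨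
      (e ≤ (i : ℕ) ∧ (i : ℕ) < n - 1 ∧ rows3s x z x e (n-e-1) u i = z (i - e)) ∨
      ((i : ℕ) = n - 1 ∧ rows3s x z x e (n-e-1) u i = u) := by
    intro e u i he
    unfold rows3s
    have := i.2
    by_cases h1 : (i : ℕ) < e
    · left; simp [h1]
    · by_cases h2 : (i : ℕ) < n - 1
      · right; left
        refine ⟨by omega, h2, ?_⟩
        rw [if_neg h1, if_pos (by omega)]
      · right; right
        refine ⟨by omega, ?_⟩
        rw [if_neg h1, if_neg (by omega), if_neg h2]
  have hRx : ∀ (e : ℕ) (u : ↥P) (i : Fin n), (i : ℕ) < e →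
      rows3s x z x e (n-e-1) u i = x i := by
    intro e u i h
    unfold rows3s
    rw [if_pos h]
  have hRz : ∀ (e : ℕ) (u : ↥P) (i : Fin n), e ≤ n - 1 → e ≤ (i : ℕ) → (i : ℕ) < n - 1 →
      rows3s x z x e (n-e-1) u i = z (i - e) := by
    intro e u i he h h2
    unfold rows3s
    rw [if_neg (by omega), if_pos (by omega)]
  have hneg : ∀ p q : ↥P, coordAt o p < coordAt o q → hlpS K P o p q = -1 := by
    intro p q h
    unfold hlpS
    rw [hlp_sgn_of_neg (by linarith)]; simp
  have hpos : ∀ p q : ↥P, coordAt o q < coordAt o p → hlpS K P o p q = 1 := by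
    intro p q h
    unfold hlpS
    rw [hlp_sgn_pos (by linarith)]; simp
  have ha : a ≤ n - 1 := hab.trans hb
  intro i k
  have hi := i.2
  have hk := k.2
  generalize hu : (bif w then t0 else y0) = u
  generalize hu' : (bif w' then t0 else y0) = u'
  have hxu : ∀ j < n - 1, coordAt o (x j) < coordAt o u := by
    intro j hj
    subst hu
    cases w
    · exact hxy j hj
    · exact (hxy j hj).trans hyt
  -- analyse k
  rcases hR b u' k hb with ⟨hk1, hS⟩ | ⟨hk1, hk2, hS⟩ | ⟨hk1, hS⟩
  · have hkn : k ≠ ⟨n - 1, by omega⟩ := by intro h; rw [h] at hk1; simp at hk1; omega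
    by_cases hka : (k : ℕ) < a
    · have e1 := hRx a u k hka
      by_cases hik : i = k
      · left
        subst hik
        rw [hS, e1, hlpS_self]
        simp [hka, hkn]
      · right; left
        exact ⟨k, fun h => hik h.symm, by rw [hS, e1]⟩
    · rcases hR a u i ha with ⟨hi1, hRi⟩ | ⟨hi1, hi2, hRi⟩ | ⟨hi1, hRi⟩
      · right; right
        refine ⟨i, fun h => hka (h ▸ hi1), ?_⟩
        rw [hRi, hRx b u' i (by omega)]
      · left
        rw [hS, hRi, hneg _ _ ((hxy _ (by omega)).trans (hyz _ (by omega)))]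
        simp [hka, hkn, hk1]
      · left
        rw [hS, hRi, hneg _ _ (hxu _ (by omega))]
        simp [hka, hkn, hk1]
  · have hkn : k ≠ ⟨n - 1, by omega⟩ := by intro h; rw [h] at hk2; simp at hk2
    have e1 := hRz a u ⟨k - b + a, by omega⟩ ha (by simp) (by simp; omega)
    simp only [Nat.add_sub_cancel] at e1
    by_cases hik : i = ⟨k - b + a, by omega⟩
    · left
      rw [hS, hik, e1, hlpS_self]
      rw [if_neg (by omega), if_neg (by omega), if_neg hkn, add_zero]
    · right; left
      exact ⟨_, fun h => hik h.symm, by rw [hS, e1]⟩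
  · have hkn : k = ⟨n - 1, by omega⟩ := by ext; exact hk1
    have hfk : ((if (k : ℕ) < a then 0 else if (k : ℕ) < b then (-1 : K) else 0)
      + if k = ⟨n - 1, by omega⟩ then hlpH K w' - hlpH K w else 0) = hlpH K w' - hlpH K w := by
      rw [if_neg (by omega), if_neg (by omega), if_pos hkn, zero_add]
    rw [hfk]
    have elast : rows3s x z x a (n-a-1) u k = u := by
      rcases hR a u k ha with ⟨h, _⟩ | ⟨_, h, _⟩ | ⟨_, h⟩
      · omega
      · omega
      · exact h
    by_cases hww : w = w'
    · subst hww
      have huu : u = u' := hu.symm.trans hu'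
      by_cases hik : i = k
      · left
        rw [hik, hS, elast, huu, hlpS_self, sub_self]
      · right; left
        exact ⟨k, fun h => hik h.symm, by rw [hS, elast, huu]⟩
    · rcases hR a u i ha with ⟨hi1, hRi⟩ | ⟨hi1, hi2, hRi⟩ | ⟨hi1, hRi⟩
      · right; right
        refine ⟨i, fun h => by rw [h] at hi1; omega, ?_⟩
        rw [hRi, hRx b u' i (by omega)]
      · by_cases hz : (i : ℕ) - a < n - 1 - b
        · right; right
          have e2 := hRz b u' ⟨i - a + b, by omega⟩ hb (by simp) (by simp; omega)
          simp only [Nat.add_sub_cancel] at e2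
          refine ⟨_, fun h => ?_, by rw [hRi, e2]⟩
          have h' := congrArg Fin.val h
          simp only at h'
          omega
        · left
          rw [hS, hRi]
          cases w <;> cases w' <;> simp at hww hu hu' <;> subst hu hu' <;> simp [hlpH]
          · exact hpos _ _ (hzt _ (by omega))
          · exact hneg _ _ (hyz _ (by omega))
      · left
        rw [hS, hRi]
        cases w <;> cases w' <;> simp at hww hu hu' <;> subst hu hu' <;> simp [hlpH]
        · exact hpos _ _ hyt
        · exact hneg _ _ hyt

lemma hlpT_config (K : Type) [Field K] [CharZero K] (P : Set Circle1) (o : Circle1) (n : ℕ)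
    (hn : 2 ≤ n) (x z : ℕ → ↥P) (y0 t0 : ↥P)
    (hxy : ∀ i < n - 1, coordAt o (x i) < coordAt o y0)
    (hyz : ∀ i < n - 1, coordAt o y0 < coordAt o (z i))
    (hzt : ∀ i < n - 1, coordAt o (z i) < coordAt o t0)
    (a b : ℕ) (ha : a ≤ n - 1) (hb : b ≤ n - 1) :
    ∃ c : K, ∀ (w w' : Bool) (v : Fin n → ↥P),
      hlpT K P o (rows3s x z x a (n-a-1) (bif w then t0 else y0))
        (rows3s x z x b (n-b-1) (bif w' then t0 else y0)) v
      = C (c + hlpH K w' - hlpH K w) *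
        ((hlpM K P (rows3s x z x a (n-a-1) (bif w then t0 else y0)) v).det *
         (hlpM K P (rows3s x z x b (n-b-1) (bif w' then t0 else y0)) v).det) := by
  rcases le_total a b with h | h
  · exact hlpT_config_le K P o n hn x z y0 t0 hxy hyz hzt a b h hb
  · obtain ⟨c, hc⟩ := hlpT_config_le K P o n hn x z y0 t0 hxy hyz hzt b a h ha
    refine ⟨-c, fun w w' v => ?_⟩
    rw [hlpT_antisymm, hc]
    simp only [C_add, C_sub, C_neg]
    ring

lemma hlp_quot (K : Type) [Field K] [CharZero K] (P : Set Circle1) (o : Circle1) (n : ℕ)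
    (hn : 2 ≤ n) (x z : ℕ → ↥P) (y0 t0 : ↥P)
    (hxy : ∀ i < n - 1, coordAt o (x i) < coordAt o y0)
    (hyz : ∀ i < n - 1, coordAt o y0 < coordAt o (z i))
    (hzt : ∀ i < n - 1, coordAt o (z i) < coordAt o t0)
    (Bq : QnRing K P n → QnRing K P n → QnRing K P n) (hB : IsQnBracket K P n 1 0 Bq)
    (v : Fin n → ↥P)
    (a b : ℕ) (ha : a ≤ n - 1) (hb : b ≤ n - 1) (w1 w2 w3 w4 : Bool)
    (h1 : toZn K P n (Dmat K P n (rows3s x z x a (n-a-1) (bif w2 then t0 else y0)) v)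
      ∈ nonZeroDivisors (ZnRing K P n))
    (h2 : toZn K P n (Dmat K P n (rows3s x z x b (n-b-1) (bif w4 then t0 else y0)) v)
      ∈ nonZeroDivisors (ZnRing K P n)) :
    Bq (EQuot K P n (rows3s x z x a (n-a-1) (bif w1 then t0 else y0))
          (rows3s x z x a (n-a-1) (bif w2 then t0 else y0)) v h1)
       (EQuot K P n (rows3s x z x b (n-b-1) (bif w3 then t0 else y0))
          (rows3s x z x b (n-b-1) (bif w4 then t0 else y0)) v h2) = 0 := by
  obtain ⟨c, hc⟩ := hlpT_config K P o n hn x z y0 t0 hxy hyz hzt a b ha hb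
  obtain ⟨hB1, hB2, hB3⟩ := hB
  have br : ∀ w w' : Bool,
      2 * Bq (toQn K P n (Dmat K P n (rows3s x z x a (n-a-1) (bif w then t0 else y0)) v))
        (toQn K P n (Dmat K P n (rows3s x z x b (n-b-1) (bif w' then t0 else y0)) v))
      = (toQn K P n (C c) + toQn K P n (C (hlpH K w')) - toQn K P n (C (hlpH K w))) *
        (toQn K P n (Dmat K P n (rows3s x z x a (n-a-1) (bif w then t0 else y0)) v) *
         toQn K P n (Dmat K P n (rows3s x z x b (n-b-1) (bif w' then t0 else y0)) v))
        + toQn K P n (Dmat K P n (rows3s x z x b (n-b-1) (bif w' then t0 else y0)) v) *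
          toQn K P n (hlpA K P o (rows3s x z x a (n-a-1) (bif w then t0 else y0)) v)
        - toQn K P n (Dmat K P n (rows3s x z x a (n-a-1) (bif w then t0 else y0)) v) *
          toQn K P n (hlpA K P o (rows3s x z x b (n-b-1) (bif w' then t0 else y0)) v) := by
    intro w w'
    have h := congrArg (toQn K P n) (hlp_bracket K P o
      (rows3s x z x a (n-a-1) (bif w then t0 else y0))
      (rows3s x z x b (n-b-1) (bif w' then t0 else y0)) v)
    rw [hc w w' v] at h
    simp only [C_add, C_sub, map_mul, map_add, map_sub, map_ofNat] at h
    rw [hB1]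
    exact h
  have hE : ∀ (R R' : Fin n → ↥P)
      (h : toZn K P n (Dmat K P n R' v) ∈ nonZeroDivisors (ZnRing K P n)),
      EQuot K P n R R' v h * toQn K P n (Dmat K P n R' v) = toQn K P n (Dmat K P n R v) := by
    intro R R' h
    unfold EQuot
    rw [Localization.mk_eq_mk']
    exact IsLocalization.mk'_spec (M := nonZeroDivisors (ZnRing K P n)) (QnRing K P n) _
      (⟨toZn K P n (Dmat K P n R' v), h⟩ : nonZeroDivisors (ZnRing K P n))
  have hU : ∀ (R' : Fin n → ↥P)
      (_ : toZn K P n (Dmat K P n R' v) ∈ nonZeroDivisors (ZnRing K P n)),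
      IsUnit (toQn K P n (Dmat K P n R' v)) := by
    intro R' h
    exact IsLocalization.map_units (QnRing K P n)
      (⟨toZn K P n (Dmat K P n R' v), h⟩ : nonZeroDivisors (ZnRing K P n))
  have b13 := br w1 w3
  have b14 := br w1 w4
  have b23 := br w2 w3
  have b24 := br w2 w4
  have e1 := hE (rows3s x z x a (n-a-1) (bif w1 then t0 else y0)) _ h1
  have e2 := hE (rows3s x z x b (n-b-1) (bif w3 then t0 else y0)) _ h2
  have u1 := hU _ h1
  have u2 := hU _ h2
  generalize EQuot K P n (rows3s x z x a (n-a-1) (bif w1 then t0 else y0))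
          (rows3s x z x a (n-a-1) (bif w2 then t0 else y0)) v h1 = E1 at *
  generalize EQuot K P n (rows3s x z x b (n-b-1) (bif w3 then t0 else y0))
          (rows3s x z x b (n-b-1) (bif w4 then t0 else y0)) v h2 = E2 at *
  generalize toQn K P n (Dmat K P n (rows3s x z x a (n-a-1) (bif w1 then t0 else y0)) v) = D1 at *
  generalize toQn K P n (Dmat K P n (rows3s x z x a (n-a-1) (bif w2 then t0 else y0)) v) = D1' at *
  generalize toQn K P n (Dmat K P n (rows3s x z x b (n-b-1) (bif w3 then t0 else y0)) v) = D2 at *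
  generalize toQn K P n (Dmat K P n (rows3s x z x b (n-b-1) (bif w4 then t0 else y0)) v) = D2' at *
  have two : IsUnit (2 : QnRing K P n) := by
    have : (2 : QnRing K P n) = toQn K P n (C 2) := by
      rw [map_ofNat C 2, map_ofNat (toQn K P n) 2]
    rw [this]
    exact ((IsUnit.mk0 (2 : K) two_ne_zero).map C).map _
  have f1 : D1' * Bq E1 E2 = Bq D1 E2 - E1 * Bq D1' E2 := by
    rw [← e1, hB2]; ring
  have f2 : ∀ c, D2' * Bq c E2 = Bq c D2 - E2 * Bq c D2' := by
    intro c
    rw [← e2, hB3]; ring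
  have f3 : 2 * (D1' * (D2' * Bq E1 E2)) = 0 := by
    have : 2 * (D1' * (D2' * Bq E1 E2)) = 2 * Bq D1 D2 - E2 * (2 * Bq D1 D2')
        - E1 * (2 * Bq D1' D2) + E1 * E2 * (2 * Bq D1' D2') := by
      have g1 := f2 D1
      have g2 := f2 D1'
      linear_combination (2 * D2') * f1 + 2 * g1 - 2 * E1 * g2
    rw [this, b13, b14, b23, b24, ← e1, ← e2]
    ring
  rw [two.mul_right_eq_zero, u1.mul_right_eq_zero, u2.mul_right_eq_zero] at f3
  exact f3

lemma hlp_order (n : ℕ) (hn : 2 ≤ n) (x y z t : ℕ → Circle1)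
    (hcfg : AnticlockwiseList
      (descPts (fun i => x i) (n-1) ++ descPts (fun i => y i) (n-1)
        ++ descPts (fun i => z i) (n-1) ++ descPts (fun i => t i) (n-1))) :
    ∃ o, (∀ i < n - 1, coordAt o (x i) < coordAt o (y 0)) ∧
      (∀ i < n - 1, coordAt o (y 0) < coordAt o (z i)) ∧
      (∀ i < n - 1, coordAt o (z i) < coordAt o (t 0)) := by
  obtain ⟨o, -, h⟩ := hcfg
  have h2 : List.Pairwise (· < ·) (List.map (coordAt o) (descPts (fun i => x i) (n-1)
      ++ descPts (fun i => y i) (n-1)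
      ++ descPts (fun i => z i) (n-1) ++ descPts (fun i => t i) (n-1))) :=
    List.isChain_iff_pairwise.mp h
  rw [List.pairwise_map, List.pairwise_append, List.pairwise_append, List.pairwise_append] at h2
  have hm : ∀ (f : ℕ → Circle1) (i : ℕ), i < n - 1 → f i ∈ descPts (fun i => f i) (n-1) := by
    intro f i hi
    unfold descPts
    rw [List.mem_reverse, List.mem_map]
    exact ⟨i, List.mem_range.mpr hi, rfl⟩
  obtain ⟨⟨⟨-, -, hxy⟩, -, hyz⟩, -, hzt⟩ := h2
  refine ⟨o, fun i hi => ?_, fun i hi => ?_, fun i hi => ?_⟩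
  · exact hxy _ (hm x i hi) _ (hm y 0 (by omega))
  · exact hyz _ (List.mem_append_right _ (hm y 0 (by omega))) _ (hm z i hi)
  · exact hzt _ (List.mem_append_right _ (hm z i hi)) _ (hm t 0 (by omega))

/-- In the quadrilateral configuration
`x_{n-1} ≺ … ≺ x_1 ≺ y_{n-1} ≺ … ≺ y_1 ≺ z_{n-1} ≺ … ≺ z_1 ≺ t_{n-1} ≺ … ≺ t_1` of
pairwise distinct points of `P` ordered anticlockwise, for all `a, b ∈ {0, …, n-1}` the
extended swapping bracket `{E(x^a, z^{n-a-1} | y_1, t_1), E(x^b, z^{n-b-1} | y_1, t_1)}`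
vanishes; in particular the images `A_i = E(x^i, z^{n-i-1} | t_1, y_1) ·
E(x^{i-1}, z^{n-i} | y_1, t_1)` of the edge functions attached to the fixed edge `xz`
pairwise Poisson-commute. -/
theorem edge_functions_commute (K : Type) [Field K] [CharZero K]
    (P : Set Circle1) (n : ℕ) (hn : 2 ≤ n) (x y z t : ℕ → ↥P)
    (hcfg : AnticlockwiseList
      (descPts (fun i => ((x i : Circle1))) (n-1) ++ descPts (fun i => ((y i : Circle1))) (n-1)
        ++ descPts (fun i => ((z i : Circle1))) (n-1)
        ++ descPts (fun i => ((t i : Circle1))) (n-1))) :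
    ∀ Bq : QnRing K P n → QnRing K P n → QnRing K P n, IsQnBracket K P n 1 0 Bq →
    ∀ v : Fin n → ↥P, Function.Injective v →
    ((∀ a b : ℕ, a ≤ n-1 → b ≤ n-1 →
      ∀ (h1 : toZn K P n (Dmat K P n (rows3s x z x a (n-a-1) (t 0)) v)
            ∈ nonZeroDivisors (ZnRing K P n))
        (h2 : toZn K P n (Dmat K P n (rows3s x z x b (n-b-1) (t 0)) v)
            ∈ nonZeroDivisors (ZnRing K P n)),
        Bq (EQuot K P n (rows3s x z x a (n-a-1) (y 0)) (rows3s x z x a (n-a-1) (t 0)) v h1)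
           (EQuot K P n (rows3s x z x b (n-b-1) (y 0)) (rows3s x z x b (n-b-1) (t 0)) v h2)
          = 0) ∧
     (∀ i j : ℕ, 1 ≤ i → i ≤ n-1 → 1 ≤ j → j ≤ n-1 →
      ∀ (hA1 : toZn K P n (Dmat K P n (rows3s x z x i (n-i-1) (y 0)) v)
            ∈ nonZeroDivisors (ZnRing K P n))
        (hA2 : toZn K P n (Dmat K P n (rows3s x z x (i-1) (n-i) (t 0)) v)
            ∈ nonZeroDivisors (ZnRing K P n))
        (hB1 : toZn K P n (Dmat K P n (rows3s x z x j (n-j-1) (y 0)) v)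
            ∈ nonZeroDivisors (ZnRing K P n))
        (hB2 : toZn K P n (Dmat K P n (rows3s x z x (j-1) (n-j) (t 0)) v)
            ∈ nonZeroDivisors (ZnRing K P n)),
        Bq (edgeQuot K P n x z (t 0) (y 0) i v hA1 hA2)
           (edgeQuot K P n x z (t 0) (y 0) j v hB1 hB2) = 0)) := by
  obtain ⟨o, hxy, hyz, hzt⟩ := hlp_order n hn (fun i => (x i : Circle1)) (fun i => (y i : Circle1))
    (fun i => (z i : Circle1)) (fun i => (t i : Circle1)) hcfg
  intro Bq hB v _
  have main := hlp_quot K P o n hn x z (y 0) (t 0) hxy hyz hzt Bq hB v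
  refine ⟨fun a b ha hb h1 h2 => main a b ha hb false true false true h1 h2, ?_⟩
  intro i j hi hi' hj hj' hA1 hA2 hB1 hB2
  unfold edgeQuot
  have ei : n - i = n - (i - 1) - 1 := by omega
  have ej : n - j = n - (j - 1) - 1 := by omega
  have m1 := main i j hi' hj' true false true false hA1 hB1
  have m2 := fun h => main i (j-1) hi' (by omega) true false false true hA1 h
  have m3 := fun h => main (i-1) j (by omega) hj' false true true false h hB1
  have m4 := main (i-1) (j-1) (by omega) (by omega) false true false true
  rw [← ej] at m2
  rw [← ei] at m3
  rw [← ei, ← ej] at m4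
  have m2' := m2 hB2
  have m3' := m3 hA2
  have m4' := m4 hA2 hB2
  simp only [cond_true, cond_false] at m1 m2' m3' m4'
  obtain ⟨-, hB2', hB3'⟩ := hB
  rw [hB2', hB3', hB3', m1, m2', m3', m4']
  ring

end
end

section
/- Let (P_i)_{i ∈ I} be a family of cyclically ordered sets of points (each on its own circle), and let Z be the commutative K-algebra with one generator (i; xy) for each index i ∈ I and each ordered pair (x,y) of points of P_i, modulo the relations (i; xx) = 0, generators attached to different indices being distinct. Define a bracket on Z by letting it equal the swapping bracket of P_i on any two generators attached to the same index i, and equal zero on any two generators attached to different indices, extended to Z by Leibniz's rule and antisymmetry. Then this bracket is a Poisson bracket on Z (antisymmetric, a biderivation, and satisfying the Jacobi identity). -/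
noncomputable section

open scoped Classical
open MvPolynomial

set_option maxHeartbeats 1000000
set_option synthInstance.maxHeartbeats 400000

/-- Index type for the generators `(i; xy)` of the glued swapping ring of a family of
cyclically ordered sets of points `P i`, each on its own circle. -/
abbrev SwapIdxF {I : Type} (P : I → Set Circle1) : Type :=
  Σ i : I, {q : (↥(P i)) × (↥(P i)) // q.1 ≠ q.2}

/-- The glued swapping ring: the commutative `K`-algebra with one generator `(i; xy)` for
each index `i` and each ordered pair `(x,y)` of points of `P i`, modulo `(i; xx) = 0`
(generators attached to different indices being distinct). -/
abbrev SwapRingF (K : Type) [Field K] {I : Type} (P : I → Set Circle1) : Type :=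
  MvPolynomial (SwapIdxF P) K

/-- The generator `(i; xy)` (equal to `0` if `x ∉ P i`, `y ∉ P i` or `x = y`). -/
def genF (K : Type) [Field K] {I : Type} (P : I → Set Circle1) (i : I) (x y : Circle1) :
    SwapRingF K P :=
  if h : x ∈ P i ∧ y ∈ P i ∧ x ≠ y then
    MvPolynomial.X ⟨i, ⟨(⟨x, h.1⟩, ⟨y, h.2.1⟩), fun hc => h.2.2 (congrArg Subtype.val hc)⟩⟩
  else 0

/-- The value of the glued bracket on two generators: the swapping bracket of `P i` if the
two generators are attached to the same index `i`, and `0` otherwise. -/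
def genBrF (K : Type) [Field K] {I : Type} (P : I → Set Circle1)
    (g g' : SwapIdxF P) : SwapRingF K P :=
  if g.1 = g'.1 then
    ((linkQ g.2.1.1.1 g.2.1.2.1 g'.2.1.1.1 g'.2.1.2.1 : ℚ) : K) •
      (genF K P g.1 g.2.1.1.1 g'.2.1.2.1 * genF K P g.1 g'.2.1.1.1 g.2.1.2.1)
  else 0

/-- The glued bracket: the biderivation extending, by the Leibniz rule in each argument,
the swapping bracket of `P i` on pairs of generators attached to the same index `i` and
`0` on pairs of generators attached to different indices. -/
def swapBrF (K : Type) [Field K] {I : Type} (P : I → Set Circle1)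
    (a b : SwapRingF K P) : SwapRingF K P :=
  (MvPolynomial.mkDerivation K
    (fun g : SwapIdxF P => (MvPolynomial.mkDerivation K (genBrF K P g)) b)) a

lemma coordAt_coe (a b : ℝ) : coordAt (b : Circle1) (a : Circle1) = Int.fract (a - b) := by
  unfold coordAt
  rw [← AddCircle.coe_sub, AddCircle.coe_equivIco_mk_apply]
  simp

lemma coordAt_zero_coe (a : ℝ) : coordAt 0 (a : Circle1) = Int.fract a := by
  have := coordAt_coe a 0
  simpa using this

lemma coordAt_zero_nonneg (x : Circle1) : 0 ≤ coordAt 0 x := by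
  induction x using QuotientAddGroup.induction_on with
  | H a => exact (coordAt_zero_coe a).symm ▸ Int.fract_nonneg a

lemma coordAt_zero_lt (x : Circle1) : coordAt 0 x < 1 := by
  induction x using QuotientAddGroup.induction_on with
  | H a => exact (coordAt_zero_coe a).symm ▸ Int.fract_lt_one a

lemma coordAt_zero_inj {x y : Circle1} (h : coordAt 0 x = coordAt 0 y) : x = y := by
  unfold coordAt at h
  have := (AddCircle.equivIco (1:ℝ) 0).injective (Subtype.ext h)
  simpa using this

lemma coordAt_change (o x : Circle1) : coordAt o x =
    coordAt 0 x - coordAt 0 o + (if coordAt 0 x < coordAt 0 o then 1 else 0) := by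
  induction x using QuotientAddGroup.induction_on with
  | H a =>
  induction o using QuotientAddGroup.induction_on with
  | H b =>
  have e1 := coordAt_coe a b
  have e2 := coordAt_zero_coe a
  have e3 := coordAt_zero_coe b
  change coordAt (b : Circle1) (a : Circle1) = coordAt 0 (a : Circle1) - coordAt 0 (b : Circle1)
    + (if coordAt 0 (a : Circle1) < coordAt 0 (b : Circle1) then 1 else 0)
  rw [e1, e2, e3, Int.fract_eq_iff]
  have := Int.fract_nonneg a
  have := Int.fract_nonneg b
  have := Int.fract_lt_one a
  have := Int.fract_lt_one b
  have ha := Int.self_sub_floor a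
  have hb := Int.self_sub_floor b
  split_ifs with h
  · refine ⟨by linarith, by linarith, ⌊a⌋ - ⌊b⌋ - 1, ?_⟩
    push_cast; linarith
  · push Not at h
    refine ⟨by linarith, by linarith, ⌊a⌋ - ⌊b⌋, ?_⟩
    push_cast; linarith

/-- sign of the difference of coordinates -/
def sg (a b : Circle1) : ℚ := sgnQ (coordAt 0 a - coordAt 0 b)

lemma sgnQ_cases (a : ℝ) : (a < 0 ∧ sgnQ a = -1) ∨ (a = 0 ∧ sgnQ a = 0) ∨ (0 < a ∧ sgnQ a = 1) := by
  unfold sgnQ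
  rcases lt_trichotomy a 0 with h | h | h
  · left; simp [h]
  · right; left; simp [h]
  · right; right; simp [h, h.ne', not_lt.mpr h.le]

lemma sgnQ_prod (r x y : ℝ) : sgnQ (r - x) * sgnQ (r - y) * sgnQ (y - x)
    = sgnQ (r - y) + sgnQ (y - x) - sgnQ (r - x) := by
  rcases sgnQ_cases (r - x) with ⟨h1, e1⟩ | ⟨h1, e1⟩ | ⟨h1, e1⟩ <;>
  rcases sgnQ_cases (r - y) with ⟨h2, e2⟩ | ⟨h2, e2⟩ | ⟨h2, e2⟩ <;>
  rcases sgnQ_cases (y - x) with ⟨h3, e3⟩ | ⟨h3, e3⟩ | ⟨h3, e3⟩ <;>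
  rw [e1, e2, e3] <;> first | (exfalso; linarith) | norm_num

lemma sgnQ_pair (o a b : Circle1) : sgnQ (coordAt o a - coordAt o b)
    = sg a b + 2 * ((if coordAt 0 a < coordAt 0 o then 1 else 0) -
       (if coordAt 0 b < coordAt 0 o then 1 else 0)) := by
  rw [coordAt_change o a, coordAt_change o b]
  unfold sg
  have := coordAt_zero_nonneg a
  have := coordAt_zero_nonneg b
  have := coordAt_zero_lt a
  have := coordAt_zero_lt b
  split_ifs with h1 h2 h2
  · norm_num
  · rcases sgnQ_cases (coordAt 0 a - coordAt 0 b) with ⟨h3, e3⟩ | ⟨h3, e3⟩ | ⟨h3, e3⟩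
    · rcases sgnQ_cases (coordAt 0 a - coordAt 0 o + 1 - (coordAt 0 b - coordAt 0 o + 0))
        with ⟨h4, e4⟩ | ⟨h4, e4⟩ | ⟨h4, e4⟩
      · exfalso; linarith
      · exfalso; linarith
      · rw [e3, e4]; norm_num
    · exfalso; linarith
    · exfalso; linarith
  · rcases sgnQ_cases (coordAt 0 a - coordAt 0 b) with ⟨h3, e3⟩ | ⟨h3, e3⟩ | ⟨h3, e3⟩
    · exfalso; linarith
    · exfalso; linarith
    · rcases sgnQ_cases (coordAt 0 a - coordAt 0 o + 0 - (coordAt 0 b - coordAt 0 o + 1))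
        with ⟨h4, e4⟩ | ⟨h4, e4⟩ | ⟨h4, e4⟩
      · rw [e3, e4]; norm_num
      · exfalso; linarith
      · exfalso; linarith
  · norm_num

lemma linkQ_eq (r x s y : Circle1) :
    linkQ r x s y = (1/2) * (sg r y + sg y x - sg r s - sg s x) := by
  unfold linkQ linkingAt
  rw [sgnQ_prod, sgnQ_prod]
  simp only [sgnQ_pair]
  ring

lemma sg_anti (a b : Circle1) : sg a b = - sg b a := by
  unfold sg
  rcases sgnQ_cases (coordAt 0 a - coordAt 0 b) with ⟨h3, e3⟩ | ⟨h3, e3⟩ | ⟨h3, e3⟩ <;>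
  rcases sgnQ_cases (coordAt 0 b - coordAt 0 a) with ⟨h4, e4⟩ | ⟨h4, e4⟩ | ⟨h4, e4⟩ <;>
  rw [e3, e4] <;> first | (exfalso; linarith) | norm_num

/-- indicator of a triple coincidence -/
def dl (a b c : Circle1) : ℚ := if a = b ∧ b = c then 1 else 0

lemma sg_tri (a b c : Circle1) :
    sg a b * sg b c - sg b c * sg a c - sg a c * sg a b = -1 + dl a b c := by
  unfold sg dl
  rcases sgnQ_cases (coordAt 0 a - coordAt 0 b) with ⟨h1, e1⟩ | ⟨h1, e1⟩ | ⟨h1, e1⟩ <;>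
  rcases sgnQ_cases (coordAt 0 b - coordAt 0 c) with ⟨h2, e2⟩ | ⟨h2, e2⟩ | ⟨h2, e2⟩ <;>
  rcases sgnQ_cases (coordAt 0 a - coordAt 0 c) with ⟨h3, e3⟩ | ⟨h3, e3⟩ | ⟨h3, e3⟩ <;>
  first
  | (exfalso; linarith)
  | (rw [e1, e2, e3, if_neg (by rintro ⟨rfl, rfl⟩; linarith)]; norm_num)
  | (rw [e1, e2, e3, if_pos ⟨coordAt_zero_inj (by linarith), coordAt_zero_inj (by linarith)⟩]
     norm_num)

lemma linkQ_anti (r x s y : Circle1) : linkQ r x s y = - linkQ s y r x := by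
  rw [linkQ_eq, linkQ_eq, sg_anti x y, sg_anti s x, sg_anti s r, sg_anti r y]
  ring

lemma coefA (r x s y t z : Circle1) :
    4 * (linkQ s y t z * linkQ r x s z + linkQ t z r x * linkQ s y t x
      + linkQ r x s y * linkQ t z r y) =
    dl r s t - dl r s z - dl r y t + dl r y z - dl x s t + dl x s z + dl x y t - dl x y z := by
  simp only [linkQ_eq]
  simp only [sg_anti x r, sg_anti s r, sg_anti y r, sg_anti t r, sg_anti z r, sg_anti s x, sg_anti y x, sg_anti t x,
    sg_anti z x, sg_anti y s, sg_anti t s, sg_anti z s, sg_anti t y, sg_anti z y, sg_anti z t]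
  linear_combination sg_tri r s t - sg_tri r s z - sg_tri r y t + sg_tri r y z - sg_tri x s t
    + sg_tri x s z + sg_tri x y t - sg_tri x y z

lemma coefB (r x s y t z : Circle1) :
    4 * (linkQ s y t z * linkQ r x t y + linkQ t z r x * linkQ s y r z
      + linkQ r x s y * linkQ t z s x) =
    -(dl r s t - dl r s z - dl r y t + dl r y z - dl x s t + dl x s z + dl x y t - dl x y z) := by
  simp only [linkQ_eq]
  simp only [sg_anti x r, sg_anti s r, sg_anti y r, sg_anti t r, sg_anti z r, sg_anti s x, sg_anti y x, sg_anti t x,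
    sg_anti z x, sg_anti y s, sg_anti t s, sg_anti z s, sg_anti t y, sg_anti z y, sg_anti z t]
  linear_combination -(sg_tri r s t - sg_tri r s z - sg_tri r y t + sg_tri r y z - sg_tri x s t
    + sg_tri x s z + sg_tri x y t - sg_tri x y z)

lemma genF_self (K : Type) [Field K] {I : Type} (P : I → Set Circle1) (i : I) (x : Circle1) :
    genF K P i x x = 0 := by
  simp [genF]

lemma dl_mul {R : Type*} [CommRing R] [Algebra ℚ R] (a b c : Circle1) (A B : R)
    (h : a = b → b = c → A = B) : algebraMap ℚ R (dl a b c) * (A - B) = 0 := by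
  unfold dl
  split_ifs with hh
  · rw [h hh.1 hh.2]; simp
  · simp

lemma key {R : Type*} [CommRing R] [Algebra ℚ R] (f : Circle1 → Circle1 → R)
    (hf : ∀ x, f x x = 0) (r x s y t z : Circle1) :
    algebraMap ℚ R (linkQ s y t z * linkQ r x s z + linkQ t z r x * linkQ s y t x
      + linkQ r x s y * linkQ t z r y) * (f r z * f s x * f t y) +
    algebraMap ℚ R (linkQ s y t z * linkQ r x t y + linkQ t z r x * linkQ s y r z
      + linkQ r x s y * linkQ t z s x) * (f r y * f t x * f s z) = 0 := by
  have hA := coefA r x s y t z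
  have hB := coefB r x s y t z
  set cA := linkQ s y t z * linkQ r x s z + linkQ t z r x * linkQ s y t x
      + linkQ r x s y * linkQ t z r y
  set cB := linkQ s y t z * linkQ r x t y + linkQ t z r x * linkQ s y r z
      + linkQ r x s y * linkQ t z s x
  have hBA : cB = -cA := by linarith
  have hA' : cA = (1/4) * (dl r s t - dl r s z - dl r y t + dl r y z - dl x s t + dl x s z
    + dl x y t - dl x y z) := by linarith
  rw [hBA, hA']
  simp only [map_neg, map_mul, map_sub, map_add]
  set A := f r z * f s x * f t y with hAd
  set B := f r y * f t x * f s z with hBd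
  have d1 := dl_mul r s t A B (by rintro rfl rfl; rw [hAd, hBd]; ring)
  have d2 := dl_mul r s z A B (by rintro rfl rfl; rw [hAd, hBd]; simp [hf])
  have d3 := dl_mul r y t A B (by rintro rfl rfl; rw [hAd, hBd]; simp [hf])
  have d4 := dl_mul r y z A B (by rintro rfl rfl; rw [hAd, hBd]; simp [hf])
  have d5 := dl_mul x s t A B (by rintro rfl rfl; rw [hAd, hBd]; simp [hf])
  have d6 := dl_mul x s z A B (by rintro rfl rfl; rw [hAd, hBd]; simp [hf])
  have d7 := dl_mul x y t A B (by rintro rfl rfl; rw [hAd, hBd]; simp [hf])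
  have d8 := dl_mul x y z A B (by rintro rfl rfl; rw [hAd, hBd]; ring)
  linear_combination algebraMap ℚ R (1/4) * (d1 - d2 - d3 + d4 - d5 + d6 + d7 - d8)

section
variable (K : Type) [Field K] {I : Type} (P : I → Set Circle1)

/-- bracket as derivation in the first argument -/
def brL (b : SwapRingF K P) : Derivation K (SwapRingF K P) (SwapRingF K P) :=
  MvPolynomial.mkDerivation K
    (fun g : SwapIdxF P => (MvPolynomial.mkDerivation K (genBrF K P g)) b)

lemma brL_apply (a b : SwapRingF K P) : brL K P b a = swapBrF K P a b := rfl

lemma brL_add (b c : SwapRingF K P) : brL K P (b + c) = brL K P b + brL K P c := by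
  apply MvPolynomial.derivation_ext
  intro g
  simp [brL, MvPolynomial.mkDerivation_X]

lemma brL_smul (k : K) (b : SwapRingF K P) : brL K P (k • b) = k • brL K P b := by
  apply MvPolynomial.derivation_ext
  intro g
  simp [brL, MvPolynomial.mkDerivation_X]

lemma brL_mul (b c : SwapRingF K P) : brL K P (b * c) = b • brL K P c + c • brL K P b := by
  apply MvPolynomial.derivation_ext
  intro g
  simp [brL, MvPolynomial.mkDerivation_X]

/-- bracket as derivation in the second argument -/
def brR (a : SwapRingF K P) : Derivation K (SwapRingF K P) (SwapRingF K P) :=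
  Derivation.mk'
    { toFun := fun b => brL K P b a
      map_add' := fun b c => by rw [brL_add]; rfl
      map_smul' := fun k b => by rw [brL_smul]; rfl }
    (fun b c => by
      change brL K P (b * c) a = b • brL K P c a + c • brL K P b a
      rw [brL_mul]; rfl)

lemma brR_apply (a b : SwapRingF K P) : brR K P a b = swapBrF K P a b := rfl

lemma swapBrF_X_X (g h : SwapIdxF P) :
    swapBrF K P (X g) (X h) = genBrF K P g h := by
  simp [swapBrF, MvPolynomial.mkDerivation_X]

lemma genBrF_anti (g h : SwapIdxF P) : genBrF K P g h = - genBrF K P h g := by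
  obtain ⟨i, g⟩ := g
  obtain ⟨j, h⟩ := h
  unfold genBrF
  by_cases hij : i = j
  · subst hij
    simp only [if_true]
    rw [linkQ_anti, mul_comm (genF K P i _ _)]
    simp
  · simp [hij, Ne.symm hij]

lemma swapBrF_anti (a b : SwapRingF K P) : swapBrF K P a b = - swapBrF K P b a := by
  have h1 : ∀ (g : SwapIdxF P) (b : SwapRingF K P),
      swapBrF K P (X g) b = - swapBrF K P b (X g) := by
    intro g b
    have : brR K P (X g) = - brL K P (X g) := by
      apply MvPolynomial.derivation_ext
      intro h
      rw [Derivation.neg_apply, brR_apply, brL_apply, swapBrF_X_X, swapBrF_X_X, genBrF_anti]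
    have := congrArg (fun D => D b) this
    exact this
  have : brL K P b = - brR K P b := by
    apply MvPolynomial.derivation_ext
    intro h
    exact h1 h b
  exact congrArg (fun D => D a) this

/-- the Jacobiator -/
def jac (a b c : SwapRingF K P) : SwapRingF K P :=
  swapBrF K P a (swapBrF K P b c) + swapBrF K P b (swapBrF K P c a)
        + swapBrF K P c (swapBrF K P a b)

lemma jac_cyc (a b c : SwapRingF K P) : jac K P a b c = jac K P b c a := by
  unfold jac; ring

lemma jac_ext (a b : SwapRingF K P) (h : ∀ k, jac K P a b (X k) = 0) (c : SwapRingF K P) :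
    jac K P a b c = 0 := by
  have e : ∀ c, jac K P a b c =
      (⁅brR K P a, brR K P b⁆ - brR K P (swapBrF K P a b) :
        Derivation K (SwapRingF K P) (SwapRingF K P)) c := by
    intro c
    rw [Derivation.sub_apply, Derivation.commutator_apply]
    simp only [brR_apply]
    unfold jac
    rw [swapBrF_anti K P c (swapBrF K P a b), swapBrF_anti K P c a, ← brR_apply K P b (-_),
      map_neg, brR_apply]
    ring
  have : (⁅brR K P a, brR K P b⁆ - brR K P (swapBrF K P a b) :
        Derivation K (SwapRingF K P) (SwapRingF K P)) = 0 := by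
    apply MvPolynomial.derivation_ext
    intro k
    rw [← e, h]; rfl
  rw [e, this]; rfl

lemma swapBrF_gen_same (i : I) (r x s y : Circle1) (hr : r ∈ P i) (hx : x ∈ P i)
    (hs : s ∈ P i) (hy : y ∈ P i) :
    swapBrF K P (genF K P i r x) (genF K P i s y) =
      ((linkQ r x s y : ℚ) : K) • (genF K P i r y * genF K P i s x) := by
  by_cases h1 : r = x
  · subst h1
    rw [genF_self, ← brL_apply, map_zero, linkQ_eq]
    rw [show (1/2) * (sg r y + sg y r - sg r s - sg s r) = 0 by
      rw [sg_anti y r, sg_anti s r]; ring]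
    simp
  by_cases h2 : s = y
  · subst h2
    rw [genF_self, ← brR_apply, map_zero, linkQ_eq]
    rw [show (1/2) * (sg r s + sg s x - sg r s - sg s x) = 0 by ring]
    simp
  have e1 : genF K P i r x = X ⟨i, ⟨(⟨r, hr⟩, ⟨x, hx⟩), fun hc => h1 (congrArg Subtype.val hc)⟩⟩ := by
    unfold genF; rw [dif_pos ⟨hr, hx, h1⟩]
  have e2 : genF K P i s y = X ⟨i, ⟨(⟨s, hs⟩, ⟨y, hy⟩), fun hc => h2 (congrArg Subtype.val hc)⟩⟩ := by
    unfold genF; rw [dif_pos ⟨hs, hy, h2⟩]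
  rw [e1, e2, swapBrF_X_X]
  simp [genBrF]

lemma swapBrF_gen_diff (i j : I) (hij : i ≠ j) (r x s y : Circle1) :
    swapBrF K P (genF K P i r x) (genF K P j s y) = 0 := by
  by_cases h1 : r ∈ P i ∧ x ∈ P i ∧ r ≠ x
  · by_cases h2 : s ∈ P j ∧ y ∈ P j ∧ s ≠ y
    · unfold genF
      rw [dif_pos h1, dif_pos h2, swapBrF_X_X]
      simp [genBrF, hij]
    · rw [show genF K P j s y = 0 by unfold genF; rw [dif_neg h2], ← brR_apply, map_zero]
  · rw [show genF K P i r x = 0 by unfold genF; rw [dif_neg h1], ← brL_apply, map_zero]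

lemma swapBrF_mul_right (a b c : SwapRingF K P) :
    swapBrF K P a (b * c) = b * swapBrF K P a c + c * swapBrF K P a b := by
  have := (brR K P a).leibniz b c
  exact this

lemma swapBrF_smul_right (k : K) (a b : SwapRingF K P) :
    swapBrF K P a (k • b) = k • swapBrF K P a b := (brR K P a).map_smul k b

lemma swapBrF_zero_right (a : SwapRingF K P) :
    swapBrF K P a 0 = 0 := (brR K P a).map_zero

lemma jac_two (i j : I) (hij : i ≠ j) (r x s y t z : Circle1)
    (hr : r ∈ P i) (hx : x ∈ P i) (hs : s ∈ P i) (hy : y ∈ P i) :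
    jac K P (genF K P i r x) (genF K P i s y) (genF K P j t z) = 0 := by
  unfold jac
  rw [swapBrF_gen_diff K P i j hij, swapBrF_gen_diff K P j i hij.symm,
    swapBrF_gen_same K P i r x s y hr hx hs hy, swapBrF_smul_right, swapBrF_mul_right,
    swapBrF_gen_diff K P j i hij.symm, swapBrF_gen_diff K P j i hij.symm]
  simp [swapBrF_zero_right]

lemma jac_same [CharZero K] (i : I) (r x s y t z : Circle1)
    (hr : r ∈ P i) (hx : x ∈ P i) (hs : s ∈ P i) (hy : y ∈ P i) (ht : t ∈ P i) (hz : z ∈ P i) :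
    jac K P (genF K P i r x) (genF K P i s y) (genF K P i t z) = 0 := by
  letI : Algebra ℚ (SwapRingF K P) := ((algebraMap K (SwapRingF K P)).comp
    (algebraMap ℚ K)).toAlgebra
  have ha : ∀ q : ℚ, algebraMap ℚ (SwapRingF K P) q = algebraMap K (SwapRingF K P) (q : K) :=
    fun q => rfl
  have := key (genF K P i) (genF_self K P i) r x s y t z
  unfold jac
  simp only [swapBrF_gen_same K P i, swapBrF_smul_right, swapBrF_mul_right, hr, hx, hs, hy, ht, hz]
  simp only [Algebra.smul_def, ← ha]
  simp only [map_add, map_mul] at this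
  linear_combination this

lemma X_eq_genF (g : SwapIdxF P) : (X g : SwapRingF K P) = genF K P g.1 g.2.1.1.1 g.2.1.2.1 := by
  obtain ⟨i, ⟨⟨⟨x, hx⟩, ⟨y, hy⟩⟩, h⟩⟩ := g
  unfold genF
  rw [dif_pos ⟨hx, hy, fun hc => h (Subtype.ext hc)⟩]

lemma jac_X [CharZero K] (g h k : SwapIdxF P) : jac K P (X g) (X h) (X k) = 0 := by
  rw [X_eq_genF, X_eq_genF, X_eq_genF]
  obtain ⟨i, ⟨⟨⟨r, hr⟩, ⟨x, hx⟩⟩, _⟩⟩ := g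
  obtain ⟨j, ⟨⟨⟨s, hs⟩, ⟨y, hy⟩⟩, _⟩⟩ := h
  obtain ⟨l, ⟨⟨⟨t, ht⟩, ⟨z, hz⟩⟩, _⟩⟩ := k
  simp only
  by_cases hij : i = j
  · subst hij
    by_cases hil : i = l
    · subst hil
      exact jac_same K P i r x s y t z hr hx hs hy ht hz
    · exact jac_two K P i l hil r x s y t z hr hx hs hy
  · by_cases hil : i = l
    · subst hil
      rw [jac_cyc, jac_cyc]
      exact jac_two K P i j hij t z r x s y ht hz hr hx
    · by_cases hjl : j = l
      · subst hjl
        rw [jac_cyc]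
        exact jac_two K P j i (Ne.symm hij) s y t z r x hs hy ht hz
      · unfold jac
        rw [swapBrF_gen_diff K P j l hjl, swapBrF_gen_diff K P l i (Ne.symm hil),
          swapBrF_gen_diff K P i j hij]
        simp [swapBrF_zero_right]

lemma jac_zero [CharZero K] (a b c : SwapRingF K P) : jac K P a b c = 0 := by
  have h1 : ∀ g h c, jac K P (X g) (X h) c = 0 := fun g h c =>
    jac_ext K P _ _ (fun k => jac_X K P g h k) c
  have h2 : ∀ g b c, jac K P (X g) b c = 0 := by
    intro g b c
    rw [jac_cyc, jac_cyc]
    refine jac_ext K P c (X g) (fun k => ?_) b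
    rw [jac_cyc]; exact h1 g k c
  refine jac_ext K P a b (fun k => ?_) c
  rw [jac_cyc, jac_cyc]
  exact h2 k a b

end

/-- For a family `(P i)_{i ∈ I}` of cyclically ordered sets of points,
each on its own circle, the glued bracket — equal to the swapping bracket of `P i` on
generators with the same index and to `0` on generators with different indices, extended
by the Leibniz rule and antisymmetry — is a Poisson bracket on the glued swapping ring:
it is antisymmetric, a biderivation, and satisfies the Jacobi identity. -/
theorem glued_swapping_bracket_is_poisson (K : Type) [Field K] [CharZero K]
    {I : Type} (P : I → Set Circle1) :
    (∀ a b : SwapRingF K P, swapBrF K P a b = - swapBrF K P b a) ∧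
    (∀ a b c : SwapRingF K P,
      swapBrF K P (a * b) c = a * swapBrF K P b c + b * swapBrF K P a c) ∧
    (∀ a b c : SwapRingF K P,
      swapBrF K P a (b * c) = b * swapBrF K P a c + c * swapBrF K P a b) ∧
    (∀ a b c : SwapRingF K P,
      swapBrF K P a (swapBrF K P b c) + swapBrF K P b (swapBrF K P c a)
        + swapBrF K P c (swapBrF K P a b) = 0) := by
  refine ⟨swapBrF_anti K P, fun a b c => ?_, swapBrF_mul_right K P, jac_zero K P⟩
  exact (brL K P c).leibniz a b

end
end
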